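/- arXiv:2402.09751 — 4 statements merged into one kernel-verified Lean document; each statement's English description precedes it below -/
import Mathlib

section
/- Let γ>1 and v₊>0 be given. Then there exist constants C>0 and δ*>0 such that for any 0<δ<δ* and any v,v̄>0 satisfying |p(v)−p(v̄)|<δ and |p(v̄)−p(v₊)|<δ, one has p(v|v̄) ≤ ( (γ+1)/(2γ)·1/p(v̄) + Cδ )·|p(v)−p(v̄)|². -/
/-!
Write `P = p(v̄)` and `1 + s = p(v) / P = (v / v̄)^(-γ)`, so that `v / v̄ = (1 + s)^(-1/γ)` and
`p(v|v̄) = P * (s + γ * ((1 + s)^(-1/γ) - 1))`. The binomial expansion to second order,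
with a cubic error `K |s|³` near `s = 0` (`binomial_cubic_bound`), gives
`p(v|v̄) ≤ P * ((γ + 1) / (2 * γ) * s² + γ * K * |s|³)` (`prel_le_of_expansion`). Since
`P * s² = |p(v) - P|² / P`, the quadratic term is exactly the claimed one; the cubic one is
`γ * K * |p(v) - P|³ / P²`, which is at most `C * δ * |p(v) - P|²` because `|p(v) - P| < δ` and
`P` stays above `p(v₊) / 2` once `δ < p(v₊) / 2`.
-/

noncomputable section

/-- The pressure `p(v) = v^(-γ)`. -/
def pf (γ v : ℝ) : ℝ := v ^ (-γ)

/-- Relative pressure `p(v|w) = p(v) - p(w) - p'(w)(v-w)`, with `p'(w) = -γ w^(-γ-1)`. -/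
def prel (γ v w : ℝ) : ℝ := pf γ v - pf γ w - (-γ * w ^ (-γ - 1)) * (v - w)

theorem binomial_cubic_bound (a : ℝ) :
    ∃ K r : ℝ, 0 < K ∧ 0 < r ∧ ∀ s : ℝ, |s| < r →
      (1 + s) ^ a ≤ 1 + a * s + a * (a - 1) / 2 * s ^ 2 + K * |s| ^ 3 := by
  have h := (Real.one_add_rpow_hasFPowerSeriesAt_zero (a := a)).isBigO_sub_partialSum_pow 3
  obtain ⟨K, hK, hb⟩ := h.exists_pos
  obtain ⟨r, hr, hball⟩ := Metric.eventually_nhds_iff.1 hb.bound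
  refine ⟨K, r, hK, hr, fun s hs => ?_⟩
  have hs' := hball (y := s) (by simpa using hs)
  have h2 : Ring.choose a 2 = a * (a - 1) / 2 := by
    have := Ring.choose_smul_choose a (n := 2) (k := 1) (by norm_num)
    simp at this
    linarith
  simp only [FormalMultilinearSeries.partialSum, Finset.sum_range_succ, Finset.sum_range_zero,
    binomialSeries_apply, Ring.choose_zero_right, Ring.choose_one_right, h2] at hs'
  simp [List.ofFn_succ] at hs'
  have := (abs_le.1 hs').2
  nlinarith [this]

/-- A cubic-error expansion of `(1 + s)^(-1/γ)`, which equals `v / w` when `1 + s = p(v) / p(w)`,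
transfers to the relative pressure; its linear term cancels and `(1 + 1/γ) / 2` is
`(γ + 1) / (2 * γ)`. -/
theorem prel_le_of_expansion {γ v w K s : ℝ} (hγ : 1 < γ) (hv : 0 < v) (hw : 0 < w)
    (hs : pf γ v = pf γ w * (1 + s))
    (hexp : (1 + s) ^ (-γ⁻¹) ≤
      1 + -γ⁻¹ * s + -γ⁻¹ * (-γ⁻¹ - 1) / 2 * s ^ 2 + K * |s| ^ 3) :
    prel γ v w ≤ pf γ w * ((γ + 1) / (2 * γ) * s ^ 2 + γ * K * |s| ^ 3) := by
  have hγ0 : 0 < γ := by linarith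
  have hP : 0 < pf γ w := Real.rpow_pos_of_pos hw _
  have h1s : 1 + s = (v / w) ^ (-γ) := by
    rw [Real.div_rpow hv.le hw.le, eq_div_iff (Real.rpow_pos_of_pos hw _).ne', mul_comm]
    exact hs.symm
  have hx : (1 + s) ^ (-γ⁻¹) = v / w := by
    rw [h1s, ← Real.rpow_mul (div_pos hv hw).le, neg_mul_neg, mul_inv_cancel₀ hγ0.ne',
      Real.rpow_one]
  have hw1 : w ^ (-γ - 1) = pf γ w / w := Real.rpow_sub_one hw.ne' _
  have hprel : prel γ v w = pf γ w * (s + γ * (v / w - 1)) := by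
    rw [prel, hs, hw1]
    field_simp
    ring
  rw [hprel]
  rw [hx] at hexp
  refine mul_le_mul_of_nonneg_left ?_ hP.le
  calc s + γ * (v / w - 1)
      ≤ s + γ * (1 + -γ⁻¹ * s + -γ⁻¹ * (-γ⁻¹ - 1) / 2 * s ^ 2 + K * |s| ^ 3 - 1) := by gcongr
    _ = (γ + 1) / (2 * γ) * s ^ 2 + γ * K * |s| ^ 3 := by
      field_simp
      ring

/-- for `γ > 1`, `v₊ > 0`, there are `C > 0` and `δ* > 0` such that
for any `0 < δ < δ*` and any `v, v̄ > 0` with `|p(v)-p(v̄)| < δ` and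
`|p(v̄)-p(v₊)| < δ`, one has
`p(v|v̄) ≤ ((γ+1)/(2γ) · 1/p(v̄) + Cδ) |p(v)-p(v̄)|²`. -/
theorem stmt2 (γ vplus : ℝ) (hγ : 1 < γ) (hvplus : 0 < vplus) :
    ∃ C δstar : ℝ, 0 < C ∧ 0 < δstar ∧ ∀ δ v vbar : ℝ,
      0 < δ → δ < δstar → 0 < v → 0 < vbar →
      |pf γ v - pf γ vbar| < δ → |pf γ vbar - pf γ vplus| < δ →
      prel γ v vbar ≤ ((γ + 1) / (2 * γ) * (1 / pf γ vbar) + C * δ)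
          * |pf γ v - pf γ vbar| ^ 2 := by
  
  obtain ⟨K, r, hK, hr, hbin⟩ := binomial_cubic_bound (-γ⁻¹)
  have hγ0 : 0 < γ := by linarith
  have hPp : 0 < pf γ vplus := Real.rpow_pos_of_pos hvplus _
  set Pp := pf γ vplus
  refine ⟨4 * γ * K / Pp ^ 2, min (Pp / 2) (r * (Pp / 2)), by positivity, by positivity, ?_⟩
  intro δ v vbar hδ hδs hv hvbar hd hb
  have hδ1 : δ < Pp / 2 := hδs.trans_le (min_le_left _ _)
  have hδ2 : δ < r * (Pp / 2) := hδs.trans_le (min_le_right _ _)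
  have hPlow : Pp / 2 < pf γ vbar := by linarith [(abs_lt.1 hb).1]
  have hP : 0 < pf γ vbar := by linarith
  have hsmall : |(pf γ v - pf γ vbar) / pf γ vbar| < r := by
    rw [abs_div, abs_of_pos hP, div_lt_iff₀ hP]
    have : r * (Pp / 2) < r * pf γ vbar := by gcongr
    linarith
  have key := prel_le_of_expansion hγ hv hvbar (by field_simp; ring) (hbin _ hsmall)
  refine key.trans ?_
  rw [div_pow, abs_div, abs_of_pos hP, div_pow, ← sq_abs (pf γ v - pf γ vbar)]
  have hD : 0 ≤ |pf γ v - pf γ vbar| := abs_nonneg _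
  generalize |pf γ v - pf γ vbar| = D at hd hD ⊢
  generalize pf γ vbar = P at hP hPlow ⊢
  -- The factor `4` in `C` comes from `1 / P² ≤ 4 / p(v₊)²`.
  have hinv : 1 / P ^ 2 ≤ 4 / Pp ^ 2 := by
    rw [div_le_div_iff₀ (by positivity) (by positivity)]
    nlinarith
  calc P * ((γ + 1) / (2 * γ) * (D ^ 2 / P ^ 2) + γ * K * (D ^ 3 / P ^ 3))
      = ((γ + 1) / (2 * γ) * (1 / P) + γ * K * (1 / P ^ 2) * D) * D ^ 2 := by
        field_simp
    _ ≤ ((γ + 1) / (2 * γ) * (1 / P) + γ * K * (4 / Pp ^ 2) * δ) * D ^ 2 := by gcongr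
    _ = ((γ + 1) / (2 * γ) * (1 / P) + 4 * γ * K / Pp ^ 2 * δ) * D ^ 2 := by ring
end
end

section
/- Let γ>1 and v₊>0 be given. Then there exist constants C>0 and δ*>0 such that for any 0<δ<δ* and any v,v̄>0 satisfying |p(v)−p(v̄)|<δ and |p(v̄)−p(v₊)|<δ, one has both Q(v|v̄) ≥ (p(v̄)^{−1/γ−1}/(2γ))·|p(v)−p(v̄)|² − ((1+γ)/(3γ²))·p(v̄)^{−1/γ−2}·(p(v)−p(v̄))³ and Q(v|v̄) ≤ ( p(v̄)^{−1/γ−1}/(2γ) + Cδ )·|p(v)−p(v̄)|². -/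
/-!
In the pressure variable `w = p(v)`, `b = p(v̄)`, so that `v = w ^ (-1/γ)`, the relative energy
becomes a function `E(w)` with `E(b) = 0` and `E'(w) = (w - b) w ^ (-1/γ - 1) / γ`
(`relEnergy`, `hasDerivAt_relEnergy`). Both bounds compare `E` with a polynomial in `w - b` that
vanishes at `b`, so it is enough that the difference has a derivative with the sign of `w - b`
(`le_of_sub_mul_deriv_nonneg`). After division by `w - b` this is a comparison of
`w ^ (-1/γ - 1)` with an affine function or a constant. The convex function `w ^ (-1/γ - 1)` lies
above its tangent at `b`, which is the lower bound (with no smallness needed). The tangent at `w`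
evaluated at `b` gives `w ^ (-1/γ - 1) ≤ b ^ (-1/γ - 1) + L δ` as long as `w`, `b` stay away
from `0`, which is the upper bound.
-/

noncomputable section

/-- The internal energy `Q(v) = v^(1-γ)/(γ-1)`. -/
def Qf (γ v : ℝ) : ℝ := v ^ (1 - γ) / (γ - 1)

/-- Relative internal energy `Q(v|w) = Q(v) - Q(w) - Q'(w)(v-w)`, with `Q'(w) = -w^(-γ)`. -/
def Qrel (γ v w : ℝ) : ℝ := Qf γ v - Qf γ w - (-(w ^ (-γ))) * (v - w)

/-- A function whose derivative on the segment from `b` to `w` has the sign of `x - b` does not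
drop below its value at `b`. -/
lemma le_of_sub_mul_deriv_nonneg {F F' : ℝ → ℝ} {b w : ℝ}
    (hF : ∀ x ∈ Set.uIcc b w, HasDerivAt F (F' x) x)
    (hs : ∀ x ∈ Set.uIcc b w, 0 ≤ (x - b) * F' x) : F b ≤ F w := by
  rcases lt_trichotomy b w with h | h | h
  · rw [Set.uIcc_of_le h.le] at hF hs
    obtain ⟨c, hc, hc'⟩ := exists_hasDerivAt_eq_slope F F' h
      (fun x hx => (hF x hx).continuousAt.continuousWithinAt)
      (fun x hx => hF x (Set.Ioo_subset_Icc_self hx))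
    have h1 := hs c (Set.Ioo_subset_Icc_self hc)
    have h2 : 0 ≤ F' c := nonneg_of_mul_nonneg_right h1 (sub_pos.2 hc.1)
    rw [eq_div_iff (sub_pos.2 h).ne'] at hc'
    nlinarith [mul_nonneg h2 (sub_pos.2 h).le]
  · rw [h]
  · rw [Set.uIcc_of_ge h.le] at hF hs
    obtain ⟨c, hc, hc'⟩ := exists_hasDerivAt_eq_slope F F' h
      (fun x hx => (hF x hx).continuousAt.continuousWithinAt)
      (fun x hx => hF x (Set.Ioo_subset_Icc_self hx))
    have h1 := hs c (Set.Ioo_subset_Icc_self hc)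
    have h2 : F' c ≤ 0 := by
      by_contra! h3
      nlinarith [mul_pos h3 (sub_pos.2 hc.2)]
    rw [eq_div_iff (sub_pos.2 h).ne'] at hc'
    nlinarith [mul_nonneg (neg_nonneg.2 h2) (sub_pos.2 h).le]

lemma pos_of_mem_uIcc {b w x : ℝ} (hb : 0 < b) (hw : 0 < w) (hx : x ∈ Set.uIcc b w) : 0 < x :=
  lt_of_lt_of_le (lt_min hb hw) hx.1

/-- A negative power lies above its tangent lines on the positive axis. -/
lemma tangent_le_rpow {r b w : ℝ} (hr : r ≤ 0) (hb : 0 < b) (hw : 0 < w) :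
    b ^ r + r * b ^ (r - 1) * (w - b) ≤ w ^ r := by
  have key := le_of_sub_mul_deriv_nonneg (b := b) (w := w)
    (F := fun x => x ^ r - r * b ^ (r - 1) * (x - b))
    (F' := fun x => r * x ^ (r - 1) - r * b ^ (r - 1) * 1)
    (fun x hx => (Real.hasDerivAt_rpow_const (Or.inl (pos_of_mem_uIcc hb hw hx).ne')).sub
      (((hasDerivAt_id x).sub_const b).const_mul _))
    (fun x hx => by
      have hx0 := pos_of_mem_uIcc hb hw hx
      rcases le_total b x with h | h
      · have := Real.rpow_le_rpow_of_nonpos hb h (by linarith : r - 1 ≤ 0)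
        nlinarith [mul_nonneg (mul_nonneg (neg_nonneg.2 hr) (sub_nonneg.2 h)) (sub_nonneg.2 this)]
      · have := Real.rpow_le_rpow_of_nonpos hx0 h (by linarith : r - 1 ≤ 0)
        nlinarith [mul_nonneg (mul_nonneg (neg_nonneg.2 hr) (sub_nonneg.2 h)) (sub_nonneg.2 this)])
  simp only [sub_self, mul_zero, sub_zero] at key
  linarith

/-- The relative internal energy `Q(v|v̄)` in the pressure variables `w = p(v)`, `b = p(v̄)`. -/
def relEnergy (γ b w : ℝ) : ℝ :=
  w ^ (1 - 1 / γ) / (γ - 1) - b ^ (1 - 1 / γ) / (γ - 1) + b * (w ^ (-1 / γ) - b ^ (-1 / γ))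

lemma relEnergy_self (γ b : ℝ) : relEnergy γ b b = 0 := by simp [relEnergy]

lemma Qrel_eq_relEnergy {γ v vbar : ℝ} (hγ : 1 < γ) (hv : 0 < v) (hvbar : 0 < vbar) :
    Qrel γ v vbar = relEnergy γ (pf γ vbar) (pf γ v) := by
  have hγ0 : γ ≠ 0 := by linarith
  have e1 : -γ * (1 - 1 / γ) = 1 - γ := by field_simp; ring
  have e2 : -γ * (-1 / γ) = 1 := by field_simp
  simp only [Qrel, Qf, relEnergy, pf, ← Real.rpow_mul hv.le, ← Real.rpow_mul hvbar.le, e1, e2,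
    Real.rpow_one]
  ring

lemma hasDerivAt_relEnergy {γ b x : ℝ} (hγ : 1 < γ) (hx : 0 < x) :
    HasDerivAt (relEnergy γ b) ((x - b) * (x ^ (-1 / γ - 1) / γ)) x := by
  have hγ0 : γ ≠ 0 := by linarith
  have hγ1 : γ - 1 ≠ 0 := by linarith
  have h1 := ((Real.hasDerivAt_rpow_const (x := x) (p := 1 - 1 / γ) (Or.inl hx.ne')).div_const
    (γ - 1)).sub_const (b ^ (1 - 1 / γ) / (γ - 1))
  have h2 := ((Real.hasDerivAt_rpow_const (x := x) (p := -1 / γ) (Or.inl hx.ne')).sub_const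
    (b ^ (-1 / γ))).const_mul b
  refine (h1.add h2).congr_deriv ?_
  have e : x ^ (1 - 1 / γ - 1) = x * x ^ (-1 / γ - 1) := by
    rw [show 1 - 1 / γ - 1 = 1 + (-1 / γ - 1) by ring, Real.rpow_add hx, Real.rpow_one]
  rw [e]
  field_simp
  ring

lemma relEnergy_lower {γ b w : ℝ} (hγ : 1 < γ) (hb : 0 < b) (hw : 0 < w) :
    b ^ (-1 / γ - 1) / (2 * γ) * (w - b) ^ 2
      - (1 + γ) / (3 * γ ^ 2) * b ^ (-1 / γ - 2) * (w - b) ^ 3 ≤ relEnergy γ b w := by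
  have hγ0 : 0 < γ := by linarith
  have key := le_of_sub_mul_deriv_nonneg (b := b) (w := w)
    (F := fun x => relEnergy γ b x - (b ^ (-1 / γ - 1) / (2 * γ) * (x - b) ^ 2
      - (1 + γ) / (3 * γ ^ 2) * b ^ (-1 / γ - 2) * (x - b) ^ 3))
    (F' := fun x => (x - b) * (1 / γ * (x ^ (-1 / γ - 1) - (b ^ (-1 / γ - 1)
      + (-1 / γ - 1) * b ^ (-1 / γ - 2) * (x - b)))))
    (fun x hx => by
      have h0 := (hasDerivAt_id x).sub_const b
      refine ((hasDerivAt_relEnergy (b := b) hγ (pos_of_mem_uIcc hb hw hx)).sub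
        (((h0.pow 2).const_mul (b ^ (-1 / γ - 1) / (2 * γ))).sub
          ((h0.pow 3).const_mul ((1 + γ) / (3 * γ ^ 2) * b ^ (-1 / γ - 2))))).congr_deriv ?_
      simp only [id]
      field_simp
      ring)
    (fun x hx => by
      have h := tangent_le_rpow (r := -1 / γ - 1) (by
        have : 0 < 1 / γ := by positivity
        rw [neg_div]; linarith) hb (pos_of_mem_uIcc hb hw hx)
      rw [show -1 / γ - 1 - 1 = -1 / γ - 2 by ring] at h
      rw [← mul_assoc]
      exact mul_nonneg (mul_self_nonneg _) (mul_nonneg (by positivity) (sub_nonneg.2 h)))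
  simp only [relEnergy_self, sub_self] at key
  norm_num at key
  linarith

lemma relEnergy_upper {γ b w m δ : ℝ} (hγ : 1 < γ) (hm : 0 < m) (hb : m ≤ b) (hw : m ≤ w)
    (hδ : |w - b| ≤ δ) :
    relEnergy γ b w ≤ (b ^ (-1 / γ - 1) / (2 * γ)
      + (1 / γ + 1) * m ^ (-1 / γ - 2) / (2 * γ) * δ) * (w - b) ^ 2 := by
  have hγ0 : 0 < γ := by linarith
  have hγi : 0 < 1 / γ := by positivity
  have hb0 : 0 < b := by linarith
  have hw0 : 0 < w := by linarith
  set K := b ^ (-1 / γ - 1) / (2 * γ) + (1 / γ + 1) * m ^ (-1 / γ - 2) / (2 * γ) * δ with hK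
  have key := le_of_sub_mul_deriv_nonneg (b := b) (w := w)
    (F := fun x => K * (x - b) ^ 2 - relEnergy γ b x)
    (F' := fun x => (x - b) * (1 / γ * (b ^ (-1 / γ - 1) + (1 / γ + 1) * m ^ (-1 / γ - 2) * δ
      - x ^ (-1 / γ - 1))))
    (fun x hx => by
      have h0 := (hasDerivAt_id x).sub_const b
      refine (((h0.pow 2).const_mul K).sub
        (hasDerivAt_relEnergy (b := b) hγ (pos_of_mem_uIcc hb0 hw0 hx))).congr_deriv ?_
      simp only [id, hK]
      field_simp
      ring)
    (fun x hx => by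
      have hmx : m ≤ x := (le_min hb hw).trans hx.1
      -- The tangent at `x`, evaluated at `b`, bounds `x ^ (-1/γ - 1)` from above.
      have h := tangent_le_rpow (r := -1 / γ - 1) (by rw [neg_div]; linarith)
        (pos_of_mem_uIcc hb0 hw0 hx) hb0
      rw [show -1 / γ - 1 - 1 = -1 / γ - 2 by ring] at h
      have h1 : x ^ (-1 / γ - 2) ≤ m ^ (-1 / γ - 2) :=
        Real.rpow_le_rpow_of_nonpos hm hmx (by rw [neg_div]; linarith)
      have h2 : |x - b| ≤ δ := (Set.abs_sub_left_of_mem_uIcc hx).trans hδ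
      have h3 : (1 / γ + 1) * (x ^ (-1 / γ - 2) * (b - x))
          ≤ (1 / γ + 1) * (m ^ (-1 / γ - 2) * δ) := by
        refine mul_le_mul_of_nonneg_left ?_ (by positivity)
        calc x ^ (-1 / γ - 2) * (b - x) ≤ x ^ (-1 / γ - 2) * δ :=
              mul_le_mul_of_nonneg_left (by linarith [(abs_le.1 h2).1])
                (Real.rpow_nonneg (by linarith) _)
          _ ≤ m ^ (-1 / γ - 2) * δ :=
              mul_le_mul_of_nonneg_right h1 ((abs_nonneg _).trans h2)
      have h4 : (-1 / γ - 1) * x ^ (-1 / γ - 2) * (b - x)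
          = -((1 / γ + 1) * (x ^ (-1 / γ - 2) * (b - x))) := by ring
      rw [← mul_assoc]
      refine mul_nonneg (mul_self_nonneg _) (mul_nonneg (by positivity) ?_)
      linarith)
  simp only [relEnergy_self, sub_self] at key
  norm_num at key
  linarith

/-- for `γ > 1`, `v₊ > 0`, there are `C > 0` and `δ* > 0` such that
for any `0 < δ < δ*` and any `v, v̄ > 0` with `|p(v)-p(v̄)| < δ` and
`|p(v̄)-p(v₊)| < δ`, one has both
`Q(v|v̄) ≥ (p(v̄)^(-1/γ-1)/(2γ)) |p(v)-p(v̄)|² - ((1+γ)/(3γ²)) p(v̄)^(-1/γ-2) (p(v)-p(v̄))³`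
and `Q(v|v̄) ≤ (p(v̄)^(-1/γ-1)/(2γ) + Cδ) |p(v)-p(v̄)|²`. -/
theorem stmt3 (γ vplus : ℝ) (hγ : 1 < γ) (hvplus : 0 < vplus) :
    ∃ C δstar : ℝ, 0 < C ∧ 0 < δstar ∧ ∀ δ v vbar : ℝ,
      0 < δ → δ < δstar → 0 < v → 0 < vbar →
      |pf γ v - pf γ vbar| < δ → |pf γ vbar - pf γ vplus| < δ →
      ((pf γ vbar) ^ (-1/γ - 1) / (2 * γ) * |pf γ v - pf γ vbar| ^ 2
          - (1 + γ) / (3 * γ ^ 2) * (pf γ vbar) ^ (-1/γ - 2)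
            * (pf γ v - pf γ vbar) ^ 3 ≤ Qrel γ v vbar)
      ∧ Qrel γ v vbar ≤ ((pf γ vbar) ^ (-1/γ - 1) / (2 * γ) + C * δ)
          * |pf γ v - pf γ vbar| ^ 2 := by
  have hP : 0 < pf γ vplus := Real.rpow_pos_of_pos hvplus _
  have hγ0 : 0 < γ := by linarith
  -- For `δ < p(v₊)/4` both pressures stay above `p(v₊)/2`.
  refine ⟨(1 / γ + 1) * (pf γ vplus / 2) ^ (-1 / γ - 2) / (2 * γ), pf γ vplus / 4,
    by positivity, by positivity, ?_⟩
  intro δ v vbar _ hδ' hv hvbar h1 h2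
  have hw : 0 < pf γ v := Real.rpow_pos_of_pos hv _
  have hb : 0 < pf γ vbar := Real.rpow_pos_of_pos hvbar _
  rw [Qrel_eq_relEnergy hγ hv hvbar, sq_abs]
  have h1' := (abs_lt.1 h1).1
  have h2' := (abs_lt.1 h2).1
  exact ⟨relEnergy_lower hγ hb hw,
    relEnergy_upper hγ (half_pos hP) (by linarith) (by linarith) h1.le⟩
end
end

section
/- For any function f:[0,1]→ℝ (absolutely continuous with derivative f') such that ∫₀¹ y(1−y)|f'(y)|² dy < ∞, one has ∫₀¹ | f(y) − ∫₀¹ f(z) dz |² dy ≤ (1/2) ∫₀¹ y(1−y) |f'(y)|² dy. -/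
open MeasureTheory Set

/-!
Write `w y = y (1 - y)`, `c = f (1/2)` and `g = f - c`. Since the mean minimizes `∫ (f - c)²`
over constants `c`, it suffices to show `2 ∫ g² ≤ ∫ w g'²`. The function `φ y = y - 1/2` is the
extremal eigenfunction (`w' = -2 φ`), and Jacobi's identity gives, away from `1/2`,
`w g'² - 2 g² = w (g' - g / φ)² + (w g² / φ)'`.
The function `w g² / φ` vanishes at `0` and `1` because `w` does, and it is differentiable at `1/2`
with derivative `w g'²` because `g (1/2) = 0`. Integrating the inequality
`(w g² / φ)' ≤ w g'² - 2 g²` over `[0,1]` gives the claim.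
-/

/-- The mean is the best constant approximation in `L²(0,1)`. -/
lemma integral_sub_mean_sq_le (f : ℝ → ℝ) (hfc : ContinuousOn f (Icc 0 1)) (c : ℝ) :
    ∫ y in Ioo (0:ℝ) 1, (f y - ∫ z in Ioo (0:ℝ) 1, f z) ^ 2
      ≤ ∫ y in Ioo (0:ℝ) 1, (f y - c) ^ 2 := by
  have hf : IntegrableOn f (Ioo 0 1) :=
    (hfc.integrableOn_compact isCompact_Icc).mono_set Ioo_subset_Icc_self
  have hf2 : IntegrableOn (fun y => f y ^ 2) (Ioo 0 1) :=
    ((hfc.pow 2).integrableOn_compact isCompact_Icc).mono_set Ioo_subset_Icc_self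
  have key : ∀ a : ℝ, ∫ y in Ioo (0:ℝ) 1, (f y - a) ^ 2
      = (∫ y in Ioo (0:ℝ) 1, f y ^ 2) - 2 * a * (∫ y in Ioo (0:ℝ) 1, f y) + a ^ 2 := by
    intro a
    have e : ∀ y, (f y - a) ^ 2 = (f y ^ 2 - 2 * a * f y) + a ^ 2 := fun y => by ring
    have hc : IntegrableOn (fun _ : ℝ => a ^ 2) (Ioo (0:ℝ) 1) := by simp
    simp_rw [e]
    have hs : IntegrableOn (fun y => f y ^ 2 - 2 * a * f y) (Ioo 0 1) :=
      hf2.sub (hf.const_mul _)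
    rw [integral_add hs hc, integral_sub hf2 (hf.const_mul _),
      integral_const_mul]
    simp
  rw [key, key]
  nlinarith [sq_nonneg ((∫ y in Ioo (0:ℝ) 1, f y) - c)]

/-- At the zero `1/2` of `g`, the function `w g² / φ` has derivative `w g'²`; the value of the
quotient at `1/2` is `0` by the convention `x / 0 = 0`, which agrees with the limit. -/
lemma hasDerivAt_weight_mul_sq_div_half {g : ℝ → ℝ} {d : ℝ} (hg : HasDerivAt g d (1/2))
    (h0 : g (1/2) = 0) :
    HasDerivAt (fun y => y * (1 - y) * g y ^ 2 / (y - 1/2)) (1/2 * (1 - 1/2) * d ^ 2) (1/2) := by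
  rw [hasDerivAt_iff_tendsto_slope] at hg ⊢
  have hw : Filter.Tendsto (fun y : ℝ => y * (1 - y)) (nhdsWithin (1/2) {1/2}ᶜ)
      (nhds (1/2 * (1 - 1/2))) :=
    (Continuous.tendsto (by fun_prop) _).mono_left nhdsWithin_le_nhds
  refine (hw.mul (hg.pow 2)).congr' ?_
  filter_upwards [self_mem_nhdsWithin] with y hy
  have hy' : y - 1/2 ≠ 0 := sub_ne_zero.2 hy
  simp only [slope_def_field, h0, sub_self, div_zero, sub_zero]
  rw [div_pow, div_div, ← mul_div_assoc, sq (y - 1/2)]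

/-- a Poincaré-type inequality with the degenerate weight `y(1-y)`:
for any absolutely continuous `f : [0,1] → ℝ` with derivative `f'` satisfying
`∫₀¹ y(1-y)|f'(y)|² dy < ∞`, one has
`∫₀¹ |f(y) - ∫₀¹ f|² dy ≤ (1/2) ∫₀¹ y(1-y)|f'(y)|² dy`. -/
theorem stmt15 (f f' : ℝ → ℝ)
    (hfc : ContinuousOn f (Icc 0 1))
    (hfd : ∀ y ∈ Ioo (0:ℝ) 1, HasDerivAt f (f' y) y)
    (hint : IntegrableOn (fun y => y * (1 - y) * (f' y) ^ 2) (Ioo 0 1)) :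
    ∫ y in Ioo (0:ℝ) 1, (f y - ∫ z in Ioo (0:ℝ) 1, f z) ^ 2
      ≤ (1/2) * ∫ y in Ioo (0:ℝ) 1, y * (1 - y) * (f' y) ^ 2 := by
  refine (integral_sub_mean_sq_le f hfc (f (1/2))).trans ?_
  set g : ℝ → ℝ := fun y => f y - f (1/2) with hg
  have hgc : ContinuousOn g (Icc 0 1) := hfc.sub continuousOn_const
  have hgd : ∀ y ∈ Ioo (0:ℝ) 1, HasDerivAt g (f' y) y := fun y hy => (hfd y hy).sub_const _
  have hg0 : g (1/2) = 0 := sub_self _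
  have hgi : IntegrableOn (fun y => 2 * g y ^ 2) (Icc 0 1) :=
    (continuousOn_const.mul (hgc.pow 2)).integrableOn_compact isCompact_Icc
  have hgi' : IntegrableOn (fun y => 2 * g y ^ 2) (Ioo 0 1) := hgi.mono_set Ioo_subset_Icc_self
  have hint' : IntegrableOn (fun y => y * (1 - y) * (f' y) ^ 2) (Icc 0 1) :=
    integrableOn_Icc_iff_integrableOn_Ioo (by simp) (by simp) |>.2 hint
  have hhalf : (1/2 : ℝ) ∈ Ioo (0:ℝ) 1 := by norm_num
  have hhd := hasDerivAt_weight_mul_sq_div_half (hgd _ hhalf) hg0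
  have hd : ∀ y ∈ Ioo (0:ℝ) 1, ∃ D, HasDerivAt (fun y => y * (1 - y) * g y ^ 2 / (y - 1/2)) D y ∧
      D ≤ y * (1 - y) * (f' y) ^ 2 - 2 * g y ^ 2 := by
    intro y hy
    by_cases hne : y = 1/2
    · subst hne
      exact ⟨_, hhd, by rw [hg0]; simp⟩
    · have hy' : y - 1/2 ≠ 0 := sub_ne_zero.2 hne
      have hw : HasDerivAt (fun y : ℝ => y * (1 - y)) (1 * (1 - y) + y * (-1)) y :=
        (hasDerivAt_id y).mul ((hasDerivAt_id y).const_sub 1)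
      refine ⟨_, (hw.mul ((hgd y hy).pow 2)).div ((hasDerivAt_id y).sub_const (1/2)) hy', ?_⟩
      -- Jacobi's identity: the difference of the two sides is `w (g' - g / φ)²`.
      have hsq : 0 ≤ y * (1 - y) * (f' y - g y / (y - 1/2)) ^ 2 :=
        mul_nonneg (mul_nonneg hy.1.le (sub_nonneg.2 hy.2.le)) (sq_nonneg _)
      rw [← sub_nonneg]
      refine hsq.trans_eq ?_
      simp only [Pi.pow_apply, Pi.mul_apply]
      generalize g y = G
      obtain ⟨p, rfl⟩ : ∃ p, y = p + 1/2 := ⟨y - 1/2, by ring⟩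
      have hp : p ≠ 0 := by simpa using hy'
      simp only [add_sub_cancel_right]
      field_simp
      ring
  choose! D hD hDle using hd
  have hFc : ContinuousOn (fun y => y * (1 - y) * g y ^ 2 / (y - 1/2)) (Icc 0 1) := by
    intro y hy
    by_cases hne : y = 1/2
    · subst hne
      exact hhd.continuousAt.continuousWithinAt
    · have hw : ContinuousWithinAt (fun y : ℝ => y * (1 - y)) (Icc 0 1) y := by fun_prop
      have hφ : ContinuousWithinAt (fun y : ℝ => y - 1/2) (Icc 0 1) y := by fun_prop
      exact (hw.mul ((hgc y hy).pow 2)).div hφ (sub_ne_zero.2 hne)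
  have hmain := intervalIntegral.sub_le_integral_of_hasDeriv_right_of_le zero_le_one hFc
    (fun y hy => (hD y hy).hasDerivWithinAt) (hint'.sub hgi) hDle
  rw [intervalIntegral.integral_of_le zero_le_one, integral_Ioc_eq_integral_Ioo] at hmain
  simp only [Pi.sub_apply] at hmain
  rw [integral_sub hint hgi', integral_const_mul] at hmain
  norm_num at hmain
  linarith
end

section
/- Let γ>1 and r>0. There exist ε₀>0 and C>0 such that the following holds. For any v₋, v₊, v > 0 with v₋ ∈ (r,2r), ε := v₊ − v₋ ∈ (0,ε₀), and v₋ < v < v₊, setting p = v^{−γ}, p_± = v_±^{−γ}, and letting V(p) := p^{−1/γ} denote the inverse of the pressure function (so V(p)=v, V(p_±)=v_±), one has | (p−p₋)/(v−v₋) + (p−p₊)/(v₊−v) + (1/2)·(V''(p₋)/V'(p₋)²)·(p₋−p₊) | ≤ C ε². -/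
/-!
Write `f(x) = x^(-γ)`, `a = v₋`, `b = v₊`, `h = v - a`, `k = b - v`. The first two terms of the
sum are a difference of divided differences, `f[a,v] - f[v,b]`, which is
`-f''(a)/2 * (b - a)` up to second order. On the other hand `V''(p)/V'(p)^2 = -f''/f'` at the
point with pressure `p`, here `(γ+1)/a` (`coeff_eq`), and `p₋ - p₊ = -f'(a) (b - a)` up to second
order, so the third term cancels the first-order part.

The error is controlled by Taylor estimates for `x^(-s)` on `[r, ∞)` of orders zero, one and two
(`taylor_zero`, `taylor_one`, `taylor_two`), each derived from the previous one, with `s + 1` in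
place of `s`, by the mean value inequality. Since negative powers are bounded on `[r, ∞)`, the
bounds are uniform with no restriction on `b - a`, and
`C = 4 γ(γ+1)(γ+2) r^(-γ-3)` works.
-/

noncomputable section

/-- `V'(p) = -(1/γ) p^(-1/γ-1)`, the derivative of the inverse `V(p) = p^(-1/γ)` of the
pressure function. -/
def Vp' (γ p : ℝ) : ℝ := -(1/γ) * p ^ (-(1/γ) - 1)

/-- `V''(p) = (1/γ)(1/γ+1) p^(-1/γ-2)`, the second derivative of `V(p) = p^(-1/γ)`. -/
def Vp'' (γ p : ℝ) : ℝ := (1/γ) * (1/γ + 1) * p ^ (-(1/γ) - 2)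

/-- Mean value inequality in the form used to climb the Taylor orders: a bound on the derivative
by `M (x - a)^n` gives a bound on the function by `M (x - a)^(n+1)`. -/
lemma mean_value_step {F F' : ℝ → ℝ} {a b M : ℝ} (n : ℕ) (hab : a ≤ b) (hM : 0 ≤ M)
    (hF : ∀ x ∈ Set.Icc a b, HasDerivAt F (F' x) x) (h0 : F a = 0)
    (hb : ∀ x ∈ Set.Icc a b, |F' x| ≤ M * (x - a) ^ n) :
    |F b| ≤ M * (b - a) ^ (n + 1) := by
  have key := (convex_Icc a b).norm_image_sub_le_of_norm_hasDerivWithin_le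
    (C := M * (b - a) ^ n)
    (fun x hx => (hF x hx).hasDerivWithinAt)
    (fun x hx => by
      rw [Real.norm_eq_abs]
      refine (hb x hx).trans ?_
      have h1 : 0 ≤ x - a := sub_nonneg.2 hx.1
      have h2 : x - a ≤ b - a := by linarith [hx.2]
      gcongr)
    (Set.left_mem_Icc.2 hab) (Set.right_mem_Icc.2 hab)
  rw [h0, sub_zero, Real.norm_eq_abs, Real.norm_eq_abs, abs_of_nonneg (sub_nonneg.2 hab)] at key
  rw [pow_succ]
  linarith

lemma hasDerivAt_rpow_neg {s x : ℝ} (hx : 0 < x) :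
    HasDerivAt (fun x : ℝ => x ^ (-s)) (-s * x ^ (-(s + 1))) x := by
  have h := Real.hasDerivAt_rpow_const (x := x) (p := -s) (Or.inl hx.ne')
  rwa [show -s - 1 = -(s + 1) by ring] at h

lemma taylor_zero {s r a x : ℝ} (hs : 0 < s) (hr : 0 < r) (ha : r ≤ a) (hx : a ≤ x) :
    |x ^ (-s) - a ^ (-s)| ≤ s * r ^ (-(s + 1)) * (x - a) := by
  have h := mean_value_step (F := fun x => x ^ (-s) - a ^ (-s))
    (F' := fun x => -s * x ^ (-(s + 1))) (M := s * r ^ (-(s + 1))) 0 hx (by positivity)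
    (fun y hy => (hasDerivAt_rpow_neg (by linarith [hy.1])).sub_const _) (by simp)
    (fun y hy => by
      have hy0 : 0 < y := by linarith [hy.1]
      rw [abs_mul, abs_neg, abs_of_pos hs, abs_of_pos (by positivity), pow_zero, mul_one]
      gcongr ?_ * ?_
      exact Real.rpow_le_rpow_of_nonpos hr (by linarith [hy.1]) (by linarith))
  simpa using h

lemma taylor_one {s r a x : ℝ} (hs : 0 < s) (hr : 0 < r) (ha : r ≤ a) (hx : a ≤ x) :
    |x ^ (-s) - a ^ (-s) + s * a ^ (-(s + 1)) * (x - a)|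
      ≤ s * (s + 1) * r ^ (-(s + 2)) * (x - a) ^ 2 := by
  have h := mean_value_step
    (F := fun x => x ^ (-s) - a ^ (-s) + s * a ^ (-(s + 1)) * (x - a))
    (F' := fun x => -s * (x ^ (-(s + 1)) - a ^ (-(s + 1))))
    (M := s * (s + 1) * r ^ (-(s + 2))) 1 hx (by positivity)
    (fun y hy => by
      have h1 := (hasDerivAt_rpow_neg (s := s) (x := y) (by linarith [hy.1])).sub_const (a ^ (-s))
      have h2 := ((hasDerivAt_id y).sub_const a).const_mul (s * a ^ (-(s + 1)))
      refine (h1.add h2).congr_deriv ?_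
      ring)
    (by simp)
    (fun y hy => by
      have h1 := taylor_zero (s := s + 1) (by linarith) hr ha hy.1
      rw [show s + 1 + 1 = s + 2 by ring] at h1
      rw [abs_mul, abs_neg, abs_of_pos hs, pow_one]
      calc _ ≤ s * _ := mul_le_mul_of_nonneg_left h1 hs.le
        _ = _ := by ring)
  exact h

lemma taylor_two {s r a x : ℝ} (hs : 0 < s) (hr : 0 < r) (ha : r ≤ a) (hx : a ≤ x) :
    |x ^ (-s) - a ^ (-s) + s * a ^ (-(s + 1)) * (x - a)
        - s * (s + 1) / 2 * a ^ (-(s + 2)) * (x - a) ^ 2|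
      ≤ s * (s + 1) * (s + 2) * r ^ (-(s + 3)) * (x - a) ^ 3 := by
  have h := mean_value_step
    (F := fun x => x ^ (-s) - a ^ (-s) + s * a ^ (-(s + 1)) * (x - a)
        - s * (s + 1) / 2 * a ^ (-(s + 2)) * (x - a) ^ 2)
    (F' := fun x => -s * (x ^ (-(s + 1)) - a ^ (-(s + 1)) + (s + 1) * a ^ (-(s + 2)) * (x - a)))
    (M := s * (s + 1) * (s + 2) * r ^ (-(s + 3))) 2 hx (by positivity)
    (fun y hy => by
      have h1 := (hasDerivAt_rpow_neg (s := s) (x := y) (by linarith [hy.1])).sub_const (a ^ (-s))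
      have h0 := (hasDerivAt_id y).sub_const a
      have h2 := h0.const_mul (s * a ^ (-(s + 1)))
      have h3 := (h0.pow 2).const_mul (s * (s + 1) / 2 * a ^ (-(s + 2)))
      refine ((h1.add h2).sub h3).congr_deriv ?_
      simp
      ring)
    (by simp)
    (fun y hy => by
      have h1 := taylor_one (s := s + 1) (by linarith) hr ha hy.1
      rw [show s + 1 + 1 = s + 2 by ring, show s + 1 + 2 = s + 3 by ring] at h1
      rw [abs_mul, abs_neg, abs_of_pos hs]
      calc _ ≤ s * _ := mul_le_mul_of_nonneg_left h1 hs.le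
        _ = _ := by ring)
  exact h

lemma coeff_eq {γ a : ℝ} (hγ : 0 < γ) (ha : 0 < a) :
    Vp'' γ (pf γ a) / (Vp' γ (pf γ a)) ^ 2 = (γ + 1) / a := by
  unfold Vp'' Vp' pf
  rw [← Real.rpow_mul ha.le, ← Real.rpow_mul ha.le, mul_pow, ← Real.rpow_natCast (a ^ _) 2,
    ← Real.rpow_mul ha.le]
  have e1 : -γ * (-(1 / γ) - 2) = 1 + 2 * γ := by field_simp; ring
  have e2 : -γ * (-(1 / γ) - 1) * ((2 : ℕ) : ℝ) = (1 + 2 * γ) + 1 := by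
    push_cast; field_simp; ring
  rw [e1, e2, Real.rpow_add_one ha.ne']
  have : 0 < a ^ (1 + 2 * γ) := by positivity
  field_simp
  ring

/-- for `γ > 1` and `r > 0` there exist `ε₀ > 0`, `C > 0` such that for any
`v₋, v₊, v > 0` with `v₋ ∈ (r, 2r)`, `ε := v₊ - v₋ ∈ (0, ε₀)` and `v₋ < v < v₊`,
writing `p = v^(-γ)`, `p_± = v_±^(-γ)`,
`|(p-p₋)/(v-v₋) + (p-p₊)/(v₊-v) + (1/2)(V''(p₋)/V'(p₋)²)(p₋-p₊)| ≤ C ε²`. -/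
theorem stmt18 (γ r : ℝ) (hγ : 1 < γ) (hr : 0 < r) :
    ∃ ε₀ C : ℝ, 0 < ε₀ ∧ 0 < C ∧
      ∀ vminus vplus v : ℝ,
        0 < vminus → 0 < vplus → 0 < v →
        r < vminus → vminus < 2 * r →
        0 < vplus - vminus → vplus - vminus < ε₀ →
        vminus < v → v < vplus →
        |(pf γ v - pf γ vminus) / (v - vminus)
            + (pf γ v - pf γ vplus) / (vplus - v)
            + (1/2) * (Vp'' γ (pf γ vminus) / (Vp' γ (pf γ vminus)) ^ 2)
              * (pf γ vminus - pf γ vplus)|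
          ≤ C * (vplus - vminus) ^ 2 := by
  have hγ0 : 0 < γ := by linarith
  set K := γ * (γ + 1) * (γ + 2) * r ^ (-(γ + 3)) with hK
  have hKpos : 0 < K := by positivity
  refine ⟨1, 4 * K, one_pos, by positivity, ?_⟩
  intro a b v ha hb hv hra _ hε _ hav hvb
  rw [coeff_eq hγ0 ha]
  unfold pf
  have R1 := taylor_two hγ0 hr hra.le hav.le
  have R2 := taylor_two hγ0 hr (hra.le.trans hav.le) hvb.le
  have R3 := taylor_one (s := γ + 1) (by linarith) hr hra.le hav.le
  have R4 := taylor_zero (s := γ + 2) (by linarith) hr hra.le hav.le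
  have R5 := taylor_one hγ0 hr hra.le (hav.trans hvb).le
  rw [show γ + 1 + 1 = γ + 2 by ring, show γ + 1 + 2 = γ + 3 by ring] at R3
  rw [show γ + 2 + 1 = γ + 3 by ring] at R4
  have eA : a ^ (-(γ + 1)) = a * a ^ (-(γ + 2)) := by
    rw [show -(γ + 1) = -(γ + 2) + 1 by ring, Real.rpow_add_one ha.ne']; ring
  have er : r ^ (-(γ + 2)) = r * r ^ (-(γ + 3)) := by
    rw [show -(γ + 2) = -(γ + 3) + 1 by ring, Real.rpow_add_one hr.ne']; ring
  rw [← hK] at R1 R2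
  rw [er] at R5
  have hρ : 0 < r ^ (-(γ + 3)) := by positivity
  have hh : 0 < v - a := by linarith
  have hk : 0 < b - v := by linarith
  -- The first-order parts cancel, leaving the five Taylor remainders with bounded coefficients.
  have split : (v ^ (-γ) - a ^ (-γ)) / (v - a) + (v ^ (-γ) - b ^ (-γ)) / (b - v)
        + 1 / 2 * ((γ + 1) / a) * (a ^ (-γ) - b ^ (-γ))
      = (v ^ (-γ) - a ^ (-γ) + γ * a ^ (-(γ + 1)) * (v - a)
          - γ * (γ + 1) / 2 * a ^ (-(γ + 2)) * (v - a) ^ 2) / (v - a)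
        - (b ^ (-γ) - v ^ (-γ) + γ * v ^ (-(γ + 1)) * (b - v)
          - γ * (γ + 1) / 2 * v ^ (-(γ + 2)) * (b - v) ^ 2) / (b - v)
        + γ * (v ^ (-(γ + 1)) - a ^ (-(γ + 1)) + (γ + 1) * a ^ (-(γ + 2)) * (v - a))
        - γ * (γ + 1) / 2 * (b - v) * (v ^ (-(γ + 2)) - a ^ (-(γ + 2)))
        - (γ + 1) / (2 * a) * (b ^ (-γ) - a ^ (-γ) + γ * a ^ (-(γ + 1)) * (b - a)) := by
    rw [eA]
    field_simp
    ring
  rw [split]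
  generalize v ^ (-γ) - a ^ (-γ) + γ * a ^ (-(γ + 1)) * (v - a)
    - γ * (γ + 1) / 2 * a ^ (-(γ + 2)) * (v - a) ^ 2 = X1 at *
  generalize b ^ (-γ) - v ^ (-γ) + γ * v ^ (-(γ + 1)) * (b - v)
    - γ * (γ + 1) / 2 * v ^ (-(γ + 2)) * (b - v) ^ 2 = X2 at *
  generalize v ^ (-(γ + 1)) - a ^ (-(γ + 1)) + (γ + 1) * a ^ (-(γ + 2)) * (v - a) = X3 at *
  generalize v ^ (-(γ + 2)) - a ^ (-(γ + 2)) = X4 at *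
  generalize b ^ (-γ) - a ^ (-γ) + γ * a ^ (-(γ + 1)) * (b - a) = X5 at *
  have hhε : v - a ≤ b - a := by linarith
  have hkε : b - v ≤ b - a := by linarith
  have B1 : |X1 / (v - a)| ≤ K * (b - a) ^ 2 := by
    rw [abs_div, abs_of_pos hh, div_le_iff₀ hh]
    calc |X1| ≤ K * (v - a) ^ 2 * (v - a) := by linarith
      _ ≤ _ := by gcongr
  have B2 : |X2 / (b - v)| ≤ K * (b - a) ^ 2 := by
    rw [abs_div, abs_of_pos hk, div_le_iff₀ hk]
    calc |X2| ≤ K * (b - v) ^ 2 * (b - v) := by linarith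
      _ ≤ _ := by gcongr
  have B3 : |γ * X3| ≤ K * (b - a) ^ 2 := by
    rw [abs_mul, abs_of_pos hγ0]
    calc γ * |X3| ≤ γ * ((γ + 1) * (γ + 2) * r ^ (-(γ + 3)) * (v - a) ^ 2) := by gcongr
      _ = K * (v - a) ^ 2 := by rw [hK]; ring
      _ ≤ _ := by gcongr
  have B4 : |γ * (γ + 1) / 2 * (b - v) * X4| ≤ K / 2 * (b - a) ^ 2 := by
    rw [abs_mul, abs_of_pos (by positivity)]
    calc γ * (γ + 1) / 2 * (b - v) * |X4|
        ≤ γ * (γ + 1) / 2 * (b - v) * ((γ + 2) * r ^ (-(γ + 3)) * (v - a)) := by gcongr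
      _ = K / 2 * ((b - v) * (v - a)) := by rw [hK]; ring
      _ ≤ K / 2 * ((b - a) * (b - a)) := by gcongr
      _ = _ := by ring
  have B5 : |(γ + 1) / (2 * a) * X5| ≤ K / 2 * (b - a) ^ 2 := by
    rw [abs_mul, abs_of_pos (by positivity)]
    calc (γ + 1) / (2 * a) * |X5|
        ≤ (γ + 2) / (2 * r) * (γ * (γ + 1) * (r * r ^ (-(γ + 3))) * (b - a) ^ 2) := by
          gcongr
          linarith
      _ = _ := by rw [hK]; field_simp
  rw [abs_le] at *
  constructor <;> linarith [B1.1, B1.2, B2.1, B2.2, B3.1, B3.2, B4.1, B4.2, B5.1, B5.2]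
end
end
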